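/- Let H be a group, m ≥ 0 an integer, R = ℤ/mℤ, and let μ: (H/H₂) ⊗ (H/H₂) ⊗ R → I_R²(H)/I_R³(H) be the homomorphism determined by μ(aH₂ ⊗ bH₂ ⊗ r) = r·(a−1)(b−1) + I_R³(H). Let p: H₂·H^m → I_R²(H)/I_R³(H) be the homomorphism h' ↦ (h'−1) + I_R³(H) (well defined since h'−1 ∈ I_R²(H) for h' ∈ H₂H^m). Then the preimage μ^{-1}(p(H₂H^m)) equals the set Y = Im(ℓ) + {C(m,2)·(hH₂ ⊗ hH₂ ⊗ 1_R) : h ∈ H}, where ℓ: (H/H₂)∧(H/H₂) → (H/H₂)⊗(H/H₂)⊗R sends x∧y to x⊗y⊗1_R − y⊗x⊗1_R and C(m,2) = m(m−1)/2; in particular Y is a subgroup of (H/H₂)⊗(H/H₂)⊗R. -/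

import Mathlib

open MonoidAlgebra TensorProduct

/-- The augmentation ideal `I_R(H)` of `R(H)`, as the `R`-submodule spanned by the
elements `a - 1`, `a ∈ H`. -/
noncomputable def augSubmodule (R : Type*) [CommRing R] (H : Type*) [Group H] :
    Submodule R (MonoidAlgebra R H) :=
  Submodule.span R {x | ∃ a : H, x = of R H a - 1}

/-- The abelianization `H/H₂` of `H`, written additively. -/
abbrev abQuot (H : Type*) [Group H] := Additive (Abelianization H)

/-- The canonical map `H → H/H₂` (additive notation). -/
def abMk {H : Type*} [Group H] (a : H) : abQuot H :=
  Additive.ofMul (Abelianization.of a)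

/-- The exterior square `A ∧ A` of an abelian group. -/
abbrev wedgeSquare (A : Type*) [AddCommGroup A] :=
  (A ⊗[ℤ] A) ⧸ Submodule.span ℤ {x : A ⊗[ℤ] A | ∃ a : A, x = a ⊗ₜ[ℤ] a}

open scoped commutatorElement

structure Tw {A T : Type*} [AddCommGroup A] [AddCommGroup T] (β : A →+ A →+ T)
    (hs : ∀ a b, β a b = β b a) where
  t : T
  a : A

namespace Tw
variable {A T : Type*} [AddCommGroup A] [AddCommGroup T] {β : A →+ A →+ T}
    {hs : ∀ a b, β a b = β b a}

theorem ext' {x y : Tw β hs} (h1 : x.t = y.t) (h2 : x.a = y.a) : x = y := by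
  cases x; cases y; simp_all

instance : Add (Tw β hs) := ⟨fun x y => ⟨x.t + y.t + β x.a y.a, x.a + y.a⟩⟩
instance : Zero (Tw β hs) := ⟨⟨0, 0⟩⟩
instance : Neg (Tw β hs) := ⟨fun x => ⟨-x.t + β x.a x.a, -x.a⟩⟩

@[simp] theorem add_t (x y : Tw β hs) : (x + y).t = x.t + y.t + β x.a y.a := rfl
@[simp] theorem add_a (x y : Tw β hs) : (x + y).a = x.a + y.a := rfl
@[simp] theorem zero_t : (0 : Tw β hs).t = 0 := rfl
@[simp] theorem zero_a : (0 : Tw β hs).a = 0 := rfl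
@[simp] theorem neg_t (x : Tw β hs) : (-x).t = -x.t + β x.a x.a := rfl
@[simp] theorem neg_a (x : Tw β hs) : (-x).a = -x.a := rfl

instance : AddCommGroup (Tw β hs) where
  add_assoc x y z := by
    apply ext'
    · simp; abel
    · simp [add_assoc]
  zero_add x := by apply ext' <;> simp
  add_zero x := by apply ext' <;> simp
  neg_add_cancel x := by apply ext' <;> simp
  add_comm x y := by
    apply ext'
    · simp [hs x.a y.a]; abel
    · simp [add_comm]
  nsmul := nsmulRec
  zsmul := zsmulRec

theorem nsmul_eq (n : ℕ) (x : Tw β hs) :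
    n • x = ⟨n • x.t + (n.choose 2) • β x.a x.a, n • x.a⟩ := by
  induction n with
  | zero => apply ext' <;> simp
  | succ n ih =>
    rw [succ_nsmul, ih]
    apply ext'
    · simp [Nat.choose_succ_succ n 1, add_smul]; abel
    · simp [add_smul]

end Tw

section Alg
variable {R H : Type*} [CommRing R] [Group H]

theorem aug_mem (a : H) : of R H a - 1 ∈ augSubmodule R H := Submodule.subset_span ⟨a, rfl⟩

theorem aug_mul_le : augSubmodule R H * augSubmodule R H ≤ augSubmodule R H := by
  conv_lhs => rw [augSubmodule, Submodule.span_mul_span]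
  rw [Submodule.span_le]
  rintro _ ⟨_, ⟨a, rfl⟩, _, ⟨b, rfl⟩, rfl⟩
  have : (of R H a - 1) * (of R H b - 1) =
      (of R H (a * b) - 1) - (of R H a - 1) - (of R H b - 1) := by
    rw [map_mul]; noncomm_ring
  simp only [this]
  exact sub_mem (sub_mem (aug_mem _) (aug_mem _)) (aug_mem _)

theorem aug32 : augSubmodule R H ^ 3 ≤ augSubmodule R H ^ 2 := by
  rw [pow_succ (augSubmodule R H) 2, pow_two, mul_assoc]
  exact mul_le_mul_right aug_mul_le _

theorem aug43 : augSubmodule R H ^ 4 ≤ augSubmodule R H ^ 3 := by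
  rw [pow_succ (augSubmodule R H) 3, pow_succ (augSubmodule R H) 2, mul_assoc]
  exact mul_le_mul_right aug_mul_le _

theorem aug2_mul (a b : H) : (of R H a - 1) * (of R H b - 1) ∈ augSubmodule R H ^ 2 := by
  rw [pow_two]; exact Submodule.mul_mem_mul (aug_mem _) (aug_mem _)

theorem aug3_of {x : MonoidAlgebra R H} (hx : x ∈ augSubmodule R H ^ 2) (h : H) :
    x * (of R H h - 1) ∈ augSubmodule R H ^ 3 := by
  rw [pow_succ]; exact Submodule.mul_mem_mul hx (aug_mem _)

theorem aug3_mul_of {x : MonoidAlgebra R H} (hx : x ∈ augSubmodule R H ^ 3) (h : H) :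
    x * of R H h ∈ augSubmodule R H ^ 3 := by
  have : x * of R H h = x * (of R H h - 1) + x := by noncomm_ring
  rw [this]
  refine add_mem (aug43 ?_) hx
  rw [pow_succ]; exact Submodule.mul_mem_mul hx (aug_mem _)

theorem aug_pow (a : H) (n : ℕ) :
    of R H (a ^ n) - 1 - ((n : R) • (of R H a - 1) +
      ((n.choose 2 : ℕ) : R) • ((of R H a - 1) * (of R H a - 1))) ∈ augSubmodule R H ^ 3 := by
  induction n with
  | zero => rw [pow_zero, map_one]; simp
  | succ n ih =>
    have h1 := aug3_mul_of ih a
    have h2 : ((n.choose 2 : ℕ) : R) • ((of R H a - 1) * (of R H a - 1) * (of R H a - 1)) ∈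
      augSubmodule R H ^ 3 := Submodule.smul_mem _ _ (aug3_of (aug2_mul a a) a)
    have h3 := add_mem h1 h2
    convert h3 using 1
    rw [pow_succ, map_mul, Nat.choose_succ_succ n 1]
    simp only [sub_mul, add_mul, smul_mul_assoc, mul_sub, mul_one, one_mul, Nat.choose_one_right,
      Nat.cast_add, Nat.cast_one, add_smul, one_smul, smul_sub]
    abel

theorem aug_comm (a b : H) :
    of R H ⁅a, b⁆ - 1 - ((of R H a - 1) * (of R H b - 1) - (of R H b - 1) * (of R H a - 1)) ∈
      augSubmodule R H ^ 3 := by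
  have h : ((of R H a - 1) * (of R H b - 1) - (of R H b - 1) * (of R H a - 1)) *
      (of R H (a⁻¹ * b⁻¹) - 1) ∈ augSubmodule R H ^ 3 :=
    aug3_of (sub_mem (aug2_mul a b) (aug2_mul b a)) _
  convert h using 1
  have e1 : (of R H a - 1) * (of R H b - 1) - (of R H b - 1) * (of R H a - 1) =
    of R H (a * b) - of R H (b * a) := by rw [map_mul, map_mul]; noncomm_ring
  rw [e1, mul_sub, sub_mul, ← map_mul, ← map_mul, mul_one, commutatorElement_def]
  have : b * a * (a⁻¹ * b⁻¹) = 1 := by group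
  rw [this, map_one, ← mul_assoc]

theorem aug_q_mul {h k : H} (hh : of R H h - 1 ∈ augSubmodule R H ^ 2) :
    (Submodule.Quotient.mk (of R H (h * k) - 1) :
      MonoidAlgebra R H ⧸ (augSubmodule R H ^ 3)) =
    Submodule.Quotient.mk (of R H h - 1) + Submodule.Quotient.mk (of R H k - 1) := by
  rw [← Submodule.Quotient.mk_add, Submodule.Quotient.eq]
  convert aug3_of hh k using 1
  rw [map_mul]; noncomm_ring

theorem aug2_one_mul {h k : H} (hh : of R H h - 1 ∈ augSubmodule R H ^ 2)
    (hk : of R H k - 1 ∈ augSubmodule R H ^ 2) : of R H (h * k) - 1 ∈ augSubmodule R H ^ 2 := by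
  have : of R H (h * k) - 1 = (of R H h - 1) * (of R H k - 1) + (of R H h - 1) + (of R H k - 1) := by
    rw [map_mul]; noncomm_ring
  rw [this]
  exact add_mem (add_mem (aug2_mul _ _) hh) hk

theorem aug2_inv {h : H} (hh : of R H h - 1 ∈ augSubmodule R H ^ 2) :
    of R H (h⁻¹) - 1 ∈ augSubmodule R H ^ 2 := by
  have : of R H (h⁻¹) - 1 = - ((of R H h - 1) * (of R H h⁻¹ - 1) + (of R H h - 1)) := by
    simp only [sub_mul, mul_sub, ← map_mul, mul_inv_cancel, map_one, mul_one, one_mul]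
    abel
  rw [this]
  exact neg_mem (add_mem (aug2_mul _ _) hh)

end Alg

/-- The subgroup `H₂H^m`. -/
abbrev GG (H : Type*) [Group H] (m : ℕ) : Subgroup H :=
  commutator H ⊔ Subgroup.closure {x : H | ∃ a : H, x = a ^ m}

theorem GG_induction {H : Type*} [Group H] {m : ℕ} (S : Subgroup H)
    (h1 : ∀ a b : H, ⁅a, b⁆ ∈ S) (h2 : ∀ a : H, a ^ m ∈ S) : GG H m ≤ S := by
  refine sup_le ?_ ?_
  · rw [commutator_def, Subgroup.commutator_le]
    intro a _ b _; exact h1 a b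
  · rw [Subgroup.closure_le]
    rintro _ ⟨a, rfl⟩; exact h2 a

theorem comm_mem_GG {H : Type*} [Group H] (m : ℕ) (a b : H) : ⁅a, b⁆ ∈ GG H m :=
  (le_sup_left : commutator H ≤ _)
    (Subgroup.commutator_mem_commutator (Subgroup.mem_top a) (Subgroup.mem_top b))

theorem pow_mem_GG {H : Type*} [Group H] (m : ℕ) (a : H) : a ^ m ∈ GG H m :=
  (le_sup_right : _ ≤ GG H m) (Subgroup.subset_closure ⟨a, rfl⟩)

theorem GG_aug2 {H : Type*} [Group H] {m : ℕ} {h : H} (hh : h ∈ GG H m) :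
    of (ZMod m) H h - 1 ∈ augSubmodule (ZMod m) H ^ 2 := by
  let S : Subgroup H :=
    { carrier := {h | of (ZMod m) H h - 1 ∈ augSubmodule (ZMod m) H ^ 2}
      mul_mem' := fun h k => aug2_one_mul h k
      one_mem' := by simp only [Set.mem_ofPred_eq, map_one, sub_self, zero_mem]
      inv_mem' := fun h => aug2_inv h }
  refine GG_induction S ?_ ?_ hh
  · intro a b
    have := add_mem (aug32 (aug_comm (R := ZMod m) a b)) (sub_mem (aug2_mul a b) (aug2_mul b a))
    rwa [sub_add_cancel] at this
  · intro a
    have := add_mem (aug32 (aug_pow (R := ZMod m) a m))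
      (Submodule.smul_mem _ ((m.choose 2 : ℕ) : ZMod m) (aug2_mul a a))
    change of (ZMod m) H (a ^ m) - 1 ∈ augSubmodule (ZMod m) H ^ 2
    rwa [CharP.cast_eq_zero, zero_smul, zero_add, sub_add_cancel] at this

theorem abMk_surj {H : Type*} [Group H] (x : abQuot H) : ∃ a : H, abMk a = x := by
  obtain ⟨a, ha⟩ := QuotientGroup.mk_surjective (Additive.toMul x)
  exact ⟨a, congrArg Additive.ofMul ha⟩

theorem abMk_mul {H : Type*} [Group H] (a b : H) : abMk (a * b) = abMk a + abMk b := by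
  simp [abMk]

theorem abMk_one {H : Type*} [Group H] : abMk (1 : H) = 0 := by
  simp [abMk]

theorem m_smul_zero {M : Type*} [AddCommGroup M] (m : ℕ) (t : M ⊗[ℤ] ZMod m) : m • t = 0 := by
  induction t using TensorProduct.induction_on with
  | zero => simp
  | tmul x r =>
    rw [← TensorProduct.tmul_smul]; simp
  | add x y hx hy => rw [smul_add, hx, hy, add_zero]

theorem choose2_two (m : ℕ) : m.choose 2 * 2 = m * (m - 1) := by
  rw [Nat.choose_two_right]
  exact Nat.div_mul_cancel (Nat.even_mul_pred_self m).two_dvd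

theorem choose_two_zero {M : Type*} [AddCommGroup M] (m : ℕ) (t : M ⊗[ℤ] ZMod m) :
    m.choose 2 • t + m.choose 2 • t = 0 := by
  rw [← two_nsmul, smul_smul, mul_comm, choose2_two, mul_comm, mul_smul, m_smul_zero, smul_zero]

/-- The set `Y` as a subgroup. -/
def YY (H : Type*) [Group H] (m : ℕ)
    (ℓ : wedgeSquare (abQuot H) →ₗ[ℤ] (abQuot H ⊗[ℤ] abQuot H) ⊗[ℤ] ZMod m)
    (hℓ : ∀ x y : abQuot H,
      ℓ (Submodule.Quotient.mk (x ⊗ₜ[ℤ] y)) =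
        (x ⊗ₜ[ℤ] y) ⊗ₜ[ℤ] (1 : ZMod m) - (y ⊗ₜ[ℤ] x) ⊗ₜ[ℤ] (1 : ZMod m)) :
    AddSubgroup ((abQuot H ⊗[ℤ] abQuot H) ⊗[ℤ] ZMod m) where
  carrier := {t | ∃ w : wedgeSquare (abQuot H), ∃ h : H,
        t = ℓ w + (m.choose 2) • ((abMk h ⊗ₜ[ℤ] abMk h) ⊗ₜ[ℤ] (1 : ZMod m))}
  zero_mem' := ⟨0, 1, by simp [abMk_one]⟩
  neg_mem' := by
    rintro _ ⟨w, h, rfl⟩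
    refine ⟨-w, h, ?_⟩
    rw [map_neg, neg_add]
    congr 1
    rw [neg_eq_iff_add_eq_zero]; exact choose_two_zero _ _
  add_mem' := by
    rintro _ _ ⟨w, h, rfl⟩ ⟨v, k, rfl⟩
    refine ⟨w + v + m.choose 2 • Submodule.Quotient.mk (abMk h ⊗ₜ[ℤ] abMk k), h * k, ?_⟩
    have := choose_two_zero m ((abMk h ⊗ₜ[ℤ] abMk k) ⊗ₜ[ℤ] (1 : ZMod m))
    rw [map_add, map_add, map_nsmul, hℓ, abMk_mul]
    simp only [TensorProduct.add_tmul, TensorProduct.tmul_add]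
    generalize (abMk h ⊗ₜ[ℤ] abMk k) ⊗ₜ[ℤ] (1 : ZMod m) = p at *
    generalize (abMk k ⊗ₜ[ℤ] abMk h) ⊗ₜ[ℤ] (1 : ZMod m) = q at *
    generalize (abMk k ⊗ₜ[ℤ] abMk k) ⊗ₜ[ℤ] (1 : ZMod m) = r at *
    generalize (abMk h ⊗ₜ[ℤ] abMk h) ⊗ₜ[ℤ] (1 : ZMod m) = s at *
    rw [nsmul_sub, nsmul_add, nsmul_add, nsmul_add, ← sub_eq_zero, ← neg_eq_zero, ← this]
    abel

section Ker
variable {H : Type*} [Group H] {m : ℕ}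
    {ℓ : wedgeSquare (abQuot H) →ₗ[ℤ] (abQuot H ⊗[ℤ] abQuot H) ⊗[ℤ] ZMod m}
    (hℓ : ∀ x y : abQuot H,
      ℓ (Submodule.Quotient.mk (x ⊗ₜ[ℤ] y)) =
        (x ⊗ₜ[ℤ] y) ⊗ₜ[ℤ] (1 : ZMod m) - (y ⊗ₜ[ℤ] x) ⊗ₜ[ℤ] (1 : ZMod m))

theorem ell_mem (w : wedgeSquare (abQuot H)) : ℓ w ∈ YY H m ℓ hℓ :=
  ⟨w, 1, by simp [abMk_one]⟩

theorem sq_mem (h : H) :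
    (m.choose 2) • ((abMk h ⊗ₜ[ℤ] abMk h) ⊗ₜ[ℤ] (1 : ZMod m)) ∈ YY H m ℓ hℓ :=
  ⟨0, h, by simp⟩

/-- The bilinear form with values in the quotient by `Y`. -/
noncomputable def betaY : abQuot H →+ abQuot H →+
    (((abQuot H ⊗[ℤ] abQuot H) ⊗[ℤ] ZMod m) ⧸ YY H m ℓ hℓ) :=
  AddMonoidHom.mk' (fun x => AddMonoidHom.mk'
      (fun y => QuotientAddGroup.mk ((x ⊗ₜ[ℤ] y) ⊗ₜ[ℤ] (1 : ZMod m)))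
      (fun a b => by
        rw [TensorProduct.tmul_add, TensorProduct.add_tmul, QuotientAddGroup.mk_add]))
    (fun a b => by
      refine AddMonoidHom.ext fun y => ?_
      change (QuotientAddGroup.mk (((a + b) ⊗ₜ[ℤ] y) ⊗ₜ[ℤ] (1 : ZMod m)) :
          ((abQuot H ⊗[ℤ] abQuot H) ⊗[ℤ] ZMod m) ⧸ YY H m ℓ hℓ) =
        QuotientAddGroup.mk ((a ⊗ₜ[ℤ] y) ⊗ₜ[ℤ] (1 : ZMod m)) +
        QuotientAddGroup.mk ((b ⊗ₜ[ℤ] y) ⊗ₜ[ℤ] (1 : ZMod m))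
      rw [TensorProduct.add_tmul, TensorProduct.add_tmul, QuotientAddGroup.mk_add])

theorem betaY_apply (x y : abQuot H) : betaY hℓ x y =
    QuotientAddGroup.mk ((x ⊗ₜ[ℤ] y) ⊗ₜ[ℤ] (1 : ZMod m)) := rfl

theorem betaY_symm (x y : abQuot H) : betaY hℓ x y = betaY hℓ y x := by
  rw [betaY_apply, betaY_apply, eq_comm, QuotientAddGroup.eq, neg_add_eq_sub, ← hℓ]
  exact ell_mem hℓ _

theorem betaY_diag (x : abQuot H) : m.choose 2 • betaY hℓ x x = 0 := by
  obtain ⟨h, rfl⟩ := abMk_surj x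
  rw [betaY_apply, ← QuotientAddGroup.mk_nsmul, QuotientAddGroup.eq_zero_iff]
  exact sq_mem hℓ h

/-- The twisted extension of the abelianization. -/
abbrev EE := Tw (betaY hℓ) (betaY_symm hℓ)

/-- The subgroup of multiples of `m`. -/
noncomputable abbrev mE : AddSubgroup (EE hℓ) := (nsmulAddMonoidHom (α := EE hℓ) m).range

/-- The quotient modulo `m`. -/
abbrev QE := EE hℓ ⧸ mE hℓ

theorem QE_smul (x : QE hℓ) : m • x = 0 := by
  obtain ⟨x, rfl⟩ := QuotientAddGroup.mk_surjective x
  rw [← QuotientAddGroup.mk_nsmul, QuotientAddGroup.eq_zero_iff]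
  exact ⟨x, rfl⟩

noncomputable instance : Module (ZMod m) (QE hℓ) := AddCommGroup.zmodModule (QE_smul hℓ)

/-- The inclusion of the quotient by `Y`. -/
noncomputable def iotaE : (((abQuot H ⊗[ℤ] abQuot H) ⊗[ℤ] ZMod m) ⧸ YY H m ℓ hℓ) →+ QE hℓ :=
  (QuotientAddGroup.mk' (mE hℓ)).comp
    (AddMonoidHom.mk' (fun t => (⟨t, 0⟩ : EE hℓ)) (fun a b => by apply Tw.ext' <;> simp))

theorem T_smul (t : ((abQuot H ⊗[ℤ] abQuot H) ⊗[ℤ] ZMod m) ⧸ YY H m ℓ hℓ) : m • t = 0 := by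
  obtain ⟨t, rfl⟩ := QuotientAddGroup.mk_surjective t
  rw [← QuotientAddGroup.mk_nsmul, m_smul_zero]; rfl

theorem iotaE_inj {t : ((abQuot H ⊗[ℤ] abQuot H) ⊗[ℤ] ZMod m) ⧸ YY H m ℓ hℓ}
    (h : iotaE hℓ t = 0) : t = 0 := by
  have h2 : (⟨t, 0⟩ : EE hℓ) ∈ mE hℓ := (QuotientAddGroup.eq_zero_iff _).1 h
  obtain ⟨x, hx⟩ := h2
  have hx : m • x = (⟨t, 0⟩ : EE hℓ) := hx
  rw [Tw.nsmul_eq, T_smul, betaY_diag] at hx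
  have := congrArg Tw.t hx
  simpa using this.symm

/-- The class of a group element in the extension. -/
noncomputable def eE (a : H) : QE hℓ := QuotientAddGroup.mk (⟨0, abMk a⟩ : EE hℓ)

theorem eE_one : eE hℓ 1 = 0 := by
  rw [eE, abMk_one]; rfl

theorem eE_mul (a b : H) : eE hℓ (a * b) - eE hℓ a - eE hℓ b =
    - iotaE hℓ (betaY hℓ (abMk a) (abMk b)) := by
  have : eE hℓ (a * b) + iotaE hℓ (betaY hℓ (abMk a) (abMk b)) = eE hℓ a + eE hℓ b := by
    change ((⟨0, abMk (a * b)⟩ + ⟨betaY hℓ (abMk a) (abMk b), 0⟩ : EE hℓ) : QE hℓ) =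
      ((⟨0, abMk a⟩ + ⟨0, abMk b⟩ : EE hℓ) : QE hℓ)
    congr 1
    apply Tw.ext' <;> simp [abMk_mul]
  rw [sub_sub, ← this]; abel

/-- The linear map from the group algebra. -/
noncomputable def phiE : MonoidAlgebra (ZMod m) H →ₗ[ZMod m] QE hℓ :=
  (Finsupp.linearCombination (ZMod m) (eE hℓ)) ∘ₗ
    (MonoidAlgebra.coeffLinearEquiv (ZMod m)).toLinearMap

theorem phiE_of (a : H) : phiE hℓ (of (ZMod m) H a) = eE hℓ a := by
  simp [phiE]

theorem phiE_two (a b : H) : phiE hℓ ((of (ZMod m) H a - 1) * (of (ZMod m) H b - 1)) =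
    - iotaE hℓ (betaY hℓ (abMk a) (abMk b)) := by
  have : (of (ZMod m) H a - 1) * (of (ZMod m) H b - 1) =
      of (ZMod m) H (a * b) - of (ZMod m) H a - of (ZMod m) H b + of (ZMod m) H 1 := by
    rw [map_mul, map_one]; noncomm_ring
  rw [this, map_add, map_sub, map_sub, phiE_of, phiE_of, phiE_of, phiE_of, eE_mul, eE_one, add_zero]

theorem phiE_three : augSubmodule (ZMod m) H ^ 3 ≤ LinearMap.ker (phiE hℓ) := by
  rw [pow_succ, pow_two, augSubmodule, Submodule.span_mul_span, Submodule.span_mul_span,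
    Submodule.span_le]
  rintro _ ⟨_, ⟨_, ⟨a, rfl⟩, _, ⟨b, rfl⟩, rfl⟩, _, ⟨c, rfl⟩, rfl⟩
  have : (of (ZMod m) H a - 1) * (of (ZMod m) H b - 1) * (of (ZMod m) H c - 1) =
      (of (ZMod m) H (a * b) - 1) * (of (ZMod m) H c - 1) -
      (of (ZMod m) H a - 1) * (of (ZMod m) H c - 1) -
      (of (ZMod m) H b - 1) * (of (ZMod m) H c - 1) := by
    rw [map_mul]; noncomm_ring
  change phiE hℓ ((of (ZMod m) H a - 1) * (of (ZMod m) H b - 1) * (of (ZMod m) H c - 1)) = 0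
  rw [this, map_sub, map_sub, phiE_two, phiE_two, phiE_two, abMk_mul, map_add,
    AddMonoidHom.add_apply, map_add]
  abel

variable {μ : ((abQuot H ⊗[ℤ] abQuot H) ⊗[ℤ] ZMod m) →ₗ[ℤ]
      (MonoidAlgebra (ZMod m) H ⧸ (augSubmodule (ZMod m) H ^ 3))}
    (hμ : ∀ (a b : H) (r : ZMod m),
      μ ((abMk a ⊗ₜ[ℤ] abMk b) ⊗ₜ[ℤ] r) =
        Submodule.Quotient.mk (r • ((of (ZMod m) H a - 1) * (of (ZMod m) H b - 1))))

include hμ in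
theorem phi_mu (t : (abQuot H ⊗[ℤ] abQuot H) ⊗[ℤ] ZMod m) :
    (augSubmodule (ZMod m) H ^ 3).liftQ (phiE hℓ) (phiE_three hℓ) (μ t) =
      - iotaE hℓ (QuotientAddGroup.mk t) := by
  induction t using TensorProduct.induction_on with
  | zero => rw [map_zero, map_zero, QuotientAddGroup.mk_zero, map_zero, neg_zero]
  | add x y hx hy =>
    rw [map_add, map_add, hx, hy, QuotientAddGroup.mk_add, map_add, neg_add]
  | tmul x r =>
    induction x using TensorProduct.induction_on with
    | zero =>
      rw [TensorProduct.zero_tmul, map_zero, map_zero, QuotientAddGroup.mk_zero, map_zero, neg_zero]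
    | add x y hx hy =>
      rw [TensorProduct.add_tmul, map_add, map_add, hx, hy, QuotientAddGroup.mk_add, map_add,
        neg_add]
    | tmul x y =>
      obtain ⟨a, rfl⟩ := abMk_surj x
      obtain ⟨b, rfl⟩ := abMk_surj y
      obtain ⟨z, rfl⟩ := ZMod.intCast_surjective r
      have hz : (abMk a ⊗ₜ[ℤ] abMk b) ⊗ₜ[ℤ] (z : ZMod m) =
          z • ((abMk a ⊗ₜ[ℤ] abMk b) ⊗ₜ[ℤ] (1 : ZMod m)) := by
        rw [← TensorProduct.tmul_smul, zsmul_one]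
      rw [hz, map_zsmul, map_zsmul, QuotientAddGroup.mk_zsmul, map_zsmul, hμ, one_smul,
        ← betaY_apply]
      rw [Submodule.liftQ_apply, phiE_two, zsmul_neg]

include hμ in
theorem ker_mu {t : (abQuot H ⊗[ℤ] abQuot H) ⊗[ℤ] ZMod m} (ht : μ t = 0) : t ∈ YY H m ℓ hℓ := by
  have := phi_mu hℓ hμ t
  rw [ht, map_zero, eq_comm, neg_eq_zero] at this
  exact (QuotientAddGroup.eq_zero_iff _).1 (iotaE_inj hℓ this)

include hμ hℓ in
theorem mu_ell (a b : H) : μ (ℓ (Submodule.Quotient.mk (abMk a ⊗ₜ[ℤ] abMk b))) =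
    Submodule.Quotient.mk (of (ZMod m) H ⁅a, b⁆ - 1) := by
  rw [hℓ, map_sub, hμ, hμ, one_smul, one_smul, ← Submodule.Quotient.mk_sub, eq_comm,
    Submodule.Quotient.eq]
  exact aug_comm a b

include hμ in
theorem mu_sq (h : H) : μ ((m.choose 2) • ((abMk h ⊗ₜ[ℤ] abMk h) ⊗ₜ[ℤ] (1 : ZMod m))) =
    Submodule.Quotient.mk (of (ZMod m) H (h ^ m) - 1) := by
  have := aug_pow (R := ZMod m) h m
  rw [CharP.cast_eq_zero, zero_smul, zero_add, Nat.cast_smul_eq_nsmul] at this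
  rw [map_nsmul, hμ, one_smul, eq_comm]
  exact (Submodule.Quotient.eq _).2 this

theorem GG_q_mul {h k : H} (hh : h ∈ GG H m) :
    (Submodule.Quotient.mk (of (ZMod m) H (h * k) - 1) :
      MonoidAlgebra (ZMod m) H ⧸ (augSubmodule (ZMod m) H ^ 3)) =
    Submodule.Quotient.mk (of (ZMod m) H h - 1) + Submodule.Quotient.mk (of (ZMod m) H k - 1) :=
  aug_q_mul (GG_aug2 hh)

include hμ in
theorem mu_Y {t : (abQuot H ⊗[ℤ] abQuot H) ⊗[ℤ] ZMod m} (ht : t ∈ YY H m ℓ hℓ) :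
    ∃ h' ∈ GG H m, μ t = Submodule.Quotient.mk (of (ZMod m) H h' - 1) := by
  obtain ⟨w, h, rfl⟩ := ht
  have key : ∃ k ∈ GG H m, μ (ℓ w) = Submodule.Quotient.mk (of (ZMod m) H k - 1) := by
    obtain ⟨x, rfl⟩ := Submodule.Quotient.mk_surjective _ w
    induction x using TensorProduct.induction_on with
    | zero =>
      refine ⟨1, one_mem _, ?_⟩
      rw [map_one, sub_self, Submodule.Quotient.mk_zero, Submodule.Quotient.mk_zero, map_zero,
        map_zero]
    | tmul x y =>
      obtain ⟨a, rfl⟩ := abMk_surj x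
      obtain ⟨b, rfl⟩ := abMk_surj y
      exact ⟨_, comm_mem_GG m a b, mu_ell hℓ hμ a b⟩
    | add x y hx hy =>
      obtain ⟨k, hk, hk2⟩ := hx
      obtain ⟨l, hl, hl2⟩ := hy
      refine ⟨k * l, mul_mem hk hl, ?_⟩
      rw [GG_q_mul hk, ← hk2, ← hl2, Submodule.Quotient.mk_add, map_add, map_add]
  obtain ⟨k, hk, hk2⟩ := key
  refine ⟨k * h ^ m, mul_mem hk (pow_mem_GG m h), ?_⟩
  rw [GG_q_mul hk, map_add, hk2, mu_sq hμ]

include hμ in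
theorem GG_mu {h : H} (hh : h ∈ GG H m) :
    ∃ t ∈ YY H m ℓ hℓ, μ t = Submodule.Quotient.mk (of (ZMod m) H h - 1) := by
  let S : Subgroup H :=
    { carrier := {h | h ∈ GG H m ∧
        ∃ t ∈ YY H m ℓ hℓ, μ t = Submodule.Quotient.mk (of (ZMod m) H h - 1)}
      mul_mem' := by
        rintro h k ⟨hh, t, ht, ht2⟩ ⟨hk, s, hs, hs2⟩
        exact ⟨mul_mem hh hk, t + s, add_mem ht hs, by rw [GG_q_mul hh, map_add, ht2, hs2]⟩
      one_mem' := ⟨one_mem _, 0, zero_mem _, by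
        rw [map_one, sub_self, Submodule.Quotient.mk_zero, map_zero]⟩
      inv_mem' := by
        rintro h ⟨hh, t, ht, ht2⟩
        refine ⟨inv_mem hh, -t, neg_mem ht, ?_⟩
        have := GG_q_mul (k := h⁻¹) hh
        rw [mul_inv_cancel, map_one, sub_self, Submodule.Quotient.mk_zero] at this
        rw [map_neg, ht2]
        exact (eq_neg_of_add_eq_zero_right this.symm).symm }
  have : GG H m ≤ S := GG_induction S
    (fun a b => ⟨comm_mem_GG m a b, _, ell_mem hℓ _, mu_ell hℓ hμ a b⟩)
    (fun a => ⟨pow_mem_GG m a, _, sq_mem hℓ a, mu_sq hμ a⟩)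
  exact (this hh).2

end Ker

/-- **Lemma 3.5**: let `H` be a group, `m ≥ 0`, `R = ℤ/mℤ`, and let
`μ : (H/H₂) ⊗ (H/H₂) ⊗ R → R(H)/I_R³(H)` be the homomorphism with
`μ(aH₂ ⊗ bH₂ ⊗ r) = r·(a-1)(b-1) + I_R³(H)` (its values lie in `I_R²(H)/I_R³(H)`,
which injects into `R(H)/I_R³(H)`), and let
`ℓ : (H/H₂)∧(H/H₂) → (H/H₂)⊗(H/H₂)⊗R` send `x∧y` to `x⊗y⊗1 - y⊗x⊗1`.
Then the preimage under `μ` of the set of classes of `h' - 1`, `h' ∈ H₂H^m`, equals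
`Y = Im(ℓ) + {C(m,2)·(hH₂ ⊗ hH₂ ⊗ 1) | h ∈ H}`; in particular `Y` is a subgroup. -/
theorem fox_quadratic_preimage_lemma (H : Type*) [Group H] (m : ℕ)
    (μ : ((abQuot H ⊗[ℤ] abQuot H) ⊗[ℤ] ZMod m) →ₗ[ℤ]
      (MonoidAlgebra (ZMod m) H ⧸ (augSubmodule (ZMod m) H ^ 3)))
    (hμ : ∀ (a b : H) (r : ZMod m),
      μ ((abMk a ⊗ₜ[ℤ] abMk b) ⊗ₜ[ℤ] r) =
        Submodule.Quotient.mk (r • ((of (ZMod m) H a - 1) * (of (ZMod m) H b - 1))))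
    (ℓ : wedgeSquare (abQuot H) →ₗ[ℤ] (abQuot H ⊗[ℤ] abQuot H) ⊗[ℤ] ZMod m)
    (hℓ : ∀ x y : abQuot H,
      ℓ (Submodule.Quotient.mk (x ⊗ₜ[ℤ] y)) =
        (x ⊗ₜ[ℤ] y) ⊗ₜ[ℤ] (1 : ZMod m) - (y ⊗ₜ[ℤ] x) ⊗ₜ[ℤ] (1 : ZMod m)) :
    {t : (abQuot H ⊗[ℤ] abQuot H) ⊗[ℤ] ZMod m |
        ∃ h' ∈ commutator H ⊔ Subgroup.closure {x : H | ∃ a : H, x = a ^ m},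
          μ t = Submodule.Quotient.mk (of (ZMod m) H h' - 1)} =
      {t | ∃ w : wedgeSquare (abQuot H), ∃ h : H,
        t = ℓ w + (m.choose 2) • ((abMk h ⊗ₜ[ℤ] abMk h) ⊗ₜ[ℤ] (1 : ZMod m))} ∧
    ∀ y₁ ∈ {t : (abQuot H ⊗[ℤ] abQuot H) ⊗[ℤ] ZMod m |
        ∃ w : wedgeSquare (abQuot H), ∃ h : H,
          t = ℓ w + (m.choose 2) • ((abMk h ⊗ₜ[ℤ] abMk h) ⊗ₜ[ℤ] (1 : ZMod m))},
      ∀ y₂ ∈ {t : (abQuot H ⊗[ℤ] abQuot H) ⊗[ℤ] ZMod m |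
        ∃ w : wedgeSquare (abQuot H), ∃ h : H,
          t = ℓ w + (m.choose 2) • ((abMk h ⊗ₜ[ℤ] abMk h) ⊗ₜ[ℤ] (1 : ZMod m))},
      y₁ - y₂ ∈ {t : (abQuot H ⊗[ℤ] abQuot H) ⊗[ℤ] ZMod m |
        ∃ w : wedgeSquare (abQuot H), ∃ h : H,
          t = ℓ w + (m.choose 2) • ((abMk h ⊗ₜ[ℤ] abMk h) ⊗ₜ[ℤ] (1 : ZMod m))} := by
  refine ⟨?_, ?_⟩
  · ext t
    constructor
    · rintro ⟨h', hh', ht⟩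
      obtain ⟨y, hy, hy2⟩ := GG_mu hℓ hμ hh'
      have h0 : μ (t - y) = 0 := by rw [map_sub, ht, hy2, sub_self]
      have := (YY H m ℓ hℓ).add_mem (ker_mu hℓ hμ h0) hy
      rw [sub_add_cancel] at this
      exact this
    · intro ht
      exact mu_Y hℓ hμ (t := t) ht
  · intro y₁ h₁ y₂ h₂
    exact (YY H m ℓ hℓ).sub_mem (x := y₁) (y := y₂) h₁ h₂
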